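/- arXiv:2402.13285 — 5 statements merged into one kernel-verified Lean document; each statement's English description precedes it below -/
import Mathlib

section
/- Disintegrated Catoni bound: For any probability measure D on Z, any loss ℓ : H × Z → [0,1], any prior density P on H, any posterior Markov kernel S ↦ Q_S with strictly positive densities, any fixed c > 0, and any δ ∈ (0,1], with probability at least 1−δ over S ∼ D^m and h ∼ Q_S one has R_D^ℓ(h) ≤ (1/(1−e^{−c}))·{ 1 − exp( −c·R_S^ℓ(h) − (1/m)·[ ln(Q_S(h)/P(h)) + ln(1/δ) ] ) }. -/
open MeasureTheory ProbabilityTheory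

/-- The true risk `R_D^ℓ(h) = E_{z∼D} ℓ(h,z)`. -/
noncomputable def trueRisk {H Z : Type*} [MeasurableSpace Z]
    (D : Measure Z) (ℓ : H → Z → ℝ) (h : H) : ℝ :=
  ∫ z, ℓ h z ∂D

/-- The empirical risk `R_S^ℓ(h) = (1/m) Σ_{i=1}^m ℓ(h,z_i)`. -/
noncomputable def empRisk {H Z : Type*} {m : ℕ}
    (ℓ : H → Z → ℝ) (h : H) (S : Fin m → Z) : ℝ :=
  (∑ i, ℓ h (S i)) / m

/-!
Convexity of `exp` bounds the moment generating function of a `[0, 1]`-valued loss by that of the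
Bernoulli variable with the same mean, so for each fixed `h` the weight
`exp (-c ∑ᵢ ℓ(h, zᵢ)) / (1 - (1 - e^{-c}) R_D(h)) ^ m` has expectation at most `1` over the sample.
The bound fails at `(S, h)` only where `Q_S(h)` is less than `δ * P(h)` times this weight.
Integrating over the failure event and exchanging the order of integration, so that the prior,
which does not depend on `S`, is integrated last, bounds its probability by `δ`.
-/

open Real
open scoped ENNReal

/-- The moment generating function at `t` of the Bernoulli distribution with mean `r`, given by its
closed form so that it makes sense for every real `r`. It is the normalisation in Catoni's bound. -/
noncomputable def bernoulliMGF (r t : ℝ) : ℝ :=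
  1 + (exp t - 1) * r

lemma bernoulliMGF_pos {r : ℝ} (hr : r ∈ Set.Icc (0 : ℝ) 1) (t : ℝ) : 0 < bernoulliMGF r t := by
  have hconv := (convex_Ioi (0 : ℝ)) (Set.mem_Ioi.2 one_pos) (Set.mem_Ioi.2 (exp_pos t))
    (sub_nonneg.2 hr.2) hr.1 (sub_add_cancel 1 r)
  simp only [smul_eq_mul, mul_one, Set.mem_Ioi] at hconv
  unfold bernoulliMGF
  linarith

lemma exp_mul_le_bernoulliMGF {x : ℝ} (hx : x ∈ Set.Icc (0 : ℝ) 1) (t : ℝ) :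
    exp (t * x) ≤ bernoulliMGF x t := by
  have hconv := convexOn_exp.2 (Set.mem_univ 0) (Set.mem_univ t)
    (sub_nonneg.2 hx.2) hx.1 (sub_add_cancel 1 x)
  simp only [smul_eq_mul, mul_zero, zero_add, exp_zero, mul_one] at hconv
  rw [mul_comm t x]
  unfold bernoulliMGF
  linarith

lemma bernoulliMGF_neg_lt_iff {c : ℝ} (hc : 0 < c) (r E : ℝ) :
    bernoulliMGF r (-c) < E ↔ 1 / (1 - exp (-c)) * (1 - E) < r := by
  have hk : 0 < 1 - exp (-c) := sub_pos.2 (exp_lt_one_iff.2 (neg_lt_zero.2 hc))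
  rw [one_div_mul_eq_div, div_lt_iff₀ hk, bernoulliMGF]
  constructor <;> intro h <;> linarith

section Weight

variable {Z ι : Type*} [MeasurableSpace Z] [Fintype ι] {D : Measure Z} [IsProbabilityMeasure D]
  {f : Z → ℝ}

lemma integral_mem_Icc {a b : ℝ} (hf : AEMeasurable f D) (hfab : ∀ᵐ z ∂D, f z ∈ Set.Icc a b) :
    ∫ z, f z ∂D ∈ Set.Icc a b :=
  (convex_Icc a b).integral_mem isClosed_Icc hfab (.of_mem_Icc a b hf hfab)

lemma mgf_le_bernoulliMGF (hf : AEMeasurable f D) (hf01 : ∀ᵐ z ∂D, f z ∈ Set.Icc (0 : ℝ) 1)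
    (t : ℝ) : mgf f D t ≤ bernoulliMGF (∫ z, f z ∂D) t := by
  have hint : Integrable (fun z => (exp t - 1) * f z) D :=
    (Integrable.of_mem_Icc 0 1 hf hf01).const_mul _
  calc mgf f D t ≤ ∫ z, (1 + (exp t - 1) * f z) ∂D :=
        integral_mono_ae (integrable_exp_mul_of_mem_Icc hf hf01) ((integrable_const 1).add hint)
          (hf01.mono fun z hz => exp_mul_le_bernoulliMGF hz t)
    _ = bernoulliMGF (∫ z, f z ∂D) t := by
        rw [integral_add (integrable_const 1) hint, integral_const_mul]
        simp [bernoulliMGF]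

lemma mgf_sum_comp_eval_pi (hf : AEMeasurable f D) (t : ℝ) :
    mgf (∑ i, fun S : ι → Z => f (S i)) (Measure.pi fun _ => D) t
      = mgf f D t ^ Fintype.card ι := by
  have hcoord (i : ι) : mgf (fun S : ι → Z => f (S i)) (Measure.pi fun _ => D) t = mgf f D t := by
    have heval := (measurePreserving_eval (fun _ : ι => D) i).map_eq
    nth_rw 2 [← heval]
    refine (mgf_map (measurable_pi_apply i).aemeasurable ?_).symm
    rw [heval]
    fun_prop
  rw [(iIndepFun_pi fun _ => hf).mgf_sum₀
    fun i => hf.comp_quasiMeasurePreserving (Measure.quasiMeasurePreserving_eval _ i)]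
  simp only [hcoord, Finset.prod_const, Finset.card_univ]

/-- Catoni's exponential weight of a sample `S` for the function `f`: the exponential of
`t * ∑ i, f (S i)` divided by its expectation in the case of a Bernoulli `f` with the same mean.
For `[0, 1]`-valued `f` the denominator is positive. -/
noncomputable def catoniWeight (D : Measure Z) (f : Z → ℝ) (t : ℝ) (S : ι → Z) : ℝ :=
  exp (t * ∑ i, f (S i)) / bernoulliMGF (∫ z, f z ∂D) t ^ Fintype.card ι

lemma lintegral_catoniWeight_le_one (hf : AEMeasurable f D)
    (hf01 : ∀ᵐ z ∂D, f z ∈ Set.Icc (0 : ℝ) 1) (t : ℝ) :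
    ∫⁻ S : ι → Z, ENNReal.ofReal (catoniWeight D f t S) ∂Measure.pi (fun _ => D) ≤ 1 := by
  have hpos := bernoulliMGF_pos (integral_mem_Icc hf hf01) t
  have hmgf : ∫ S : ι → Z, exp (t * ∑ i, f (S i)) ∂Measure.pi (fun _ => D)
      = mgf f D t ^ Fintype.card ι := by
    simpa only [mgf, Finset.sum_apply] using mgf_sum_comp_eval_pi hf t
  have hint : Integrable (fun S : ι → Z => exp (t * ∑ i, f (S i))) (Measure.pi fun _ => D) := by
    refine .of_integral_ne_zero ?_
    rw [hmgf]
    exact (pow_pos (mgf_pos (integrable_exp_mul_of_mem_Icc hf hf01)) _).ne'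
  unfold catoniWeight
  rw [← ofReal_integral_eq_lintegral_ofReal (hint.div_const _) (ae_of_all _ fun S => by positivity),
    ENNReal.ofReal_le_one, integral_div, hmgf, ← div_pow]
  exact pow_le_one₀ (div_nonneg mgf_nonneg hpos.le)
    (div_le_one_of_le₀ (mgf_le_bernoulliMGF hf hf01 t) hpos.le)

end Weight

lemma measurable_catoniWeight {Z H ι : Type*} [MeasurableSpace Z] [MeasurableSpace H] [Fintype ι]
    {D : Measure Z} [SFinite D] {ℓ : H → Z → ℝ} (hℓ : Measurable (Function.uncurry ℓ)) (t : ℝ) :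
    Measurable fun p : (ι → Z) × H => catoniWeight D (ℓ p.2) t p.1 := by
  have hrisk : Measurable fun p : (ι → Z) × H => ∫ z, ℓ p.2 z ∂D :=
    (hℓ.stronglyMeasurable.integral_prod_right (ν := D)).measurable.comp measurable_snd
  unfold catoniWeight bernoulliMGF
  fun_prop

lemma lt_mul_of_lt_exp_sub_log {n : ℕ} (hn : 0 < n) {t s a q p δ : ℝ} (ha : 0 < a) (hq : 0 < q)
    (hp : 0 < p) (hδ : 0 < δ)
    (h : a < exp (t * (s / n) - (1 / n) * (log (q / p) + log (1 / δ)))) :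
    q < p * (δ * (exp (t * s) / a ^ n)) := by
  have hn' : (n : ℝ) ≠ 0 := Nat.cast_ne_zero.2 hn.ne'
  have hpow : a ^ n < exp (t * s) / (q / p * (1 / δ)) :=
    calc a ^ n < exp (t * (s / n) - (1 / n) * (log (q / p) + log (1 / δ))) ^ n :=
          pow_lt_pow_left₀ h ha.le hn.ne'
      _ = exp (t * s - (log (q / p) + log (1 / δ))) := by
          rw [← exp_nat_mul]
          congr 1
          field_simp
      _ = exp (t * s) / (q / p * (1 / δ)) := by
          rw [exp_sub, exp_add, exp_log (by positivity), exp_log (by positivity)]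
  rw [lt_div_iff₀ (by positivity)] at hpow
  calc q = a ^ n * (q / p * (1 / δ)) * (p * δ / a ^ n) := by field_simp
    _ < exp (t * s) * (p * δ / a ^ n) := by gcongr
    _ = p * (δ * (exp (t * s) / a ^ n)) := by ring

lemma one_sub_le_measure_of_forall_subset_compl {Ω : Type*} [MeasurableSpace Ω] {μ : Measure Ω}
    [IsProbabilityMeasure μ] {A : Set Ω} {ε : ℝ≥0∞}
    (h : ∀ C, MeasurableSet C → C ⊆ Aᶜ → μ C ≤ ε) : 1 - ε ≤ μ A := by
  have hmeas := measurableSet_toMeasurable μ A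
  have hcompl := h _ hmeas.compl (Set.compl_subset_compl.2 (subset_toMeasurable μ A))
  rw [prob_compl_eq_one_sub hmeas, measure_toMeasurable] at hcompl
  exact tsub_le_iff_tsub_le.1 hcompl

lemma compProd_le_of_density_le {Ω H : Type*} [MeasurableSpace Ω] [MeasurableSpace H]
    {μ : Measure Ω} [SFinite μ] {κ : Kernel Ω H} [IsSFiniteKernel κ]
    {lam ν : Measure H} [IsProbabilityMeasure ν] {p : H → ℝ≥0∞} (hp : Measurable p)
    (hν : ν = lam.withDensity p) {q : Ω → H → ℝ≥0∞} (hκ : ∀ ω, κ ω = lam.withDensity (q ω))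
    {F : Ω → H → ℝ≥0∞} (hF : Measurable (Function.uncurry F)) {ε : ℝ≥0∞}
    (hFε : ∀ h, ∫⁻ ω, F ω h ∂μ ≤ ε) {C : Set (Ω × H)} (hC : MeasurableSet C)
    (hle : ∀ ω h, (ω, h) ∈ C → q ω h ≤ p h * F ω h) : (μ ⊗ₘ κ) C ≤ ε := by
  have hsection (ω : Ω) : κ ω (Prod.mk ω ⁻¹' C) ≤ ∫⁻ h, F ω h ∂ν := by
    have hCω : MeasurableSet (Prod.mk ω ⁻¹' C) := measurable_prodMk_left hC
    calc κ ω (Prod.mk ω ⁻¹' C) = ∫⁻ h in Prod.mk ω ⁻¹' C, q ω h ∂lam := by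
          rw [hκ, withDensity_apply _ hCω]
      _ ≤ ∫⁻ h in Prod.mk ω ⁻¹' C, p h * F ω h ∂lam := setLIntegral_mono' hCω (hle ω)
      _ ≤ ∫⁻ h, p h * F ω h ∂lam := setLIntegral_le_lintegral _ _
      _ = ∫⁻ h, F ω h ∂ν := by
          rw [hν, lintegral_withDensity_eq_lintegral_mul _ hp hF.of_uncurry_left]
          rfl
  calc (μ ⊗ₘ κ) C = ∫⁻ ω, κ ω (Prod.mk ω ⁻¹' C) ∂μ := Measure.compProd_apply hC
    _ ≤ ∫⁻ ω, ∫⁻ h, F ω h ∂ν ∂μ := lintegral_mono hsection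
    _ = ∫⁻ h, ∫⁻ ω, F ω h ∂μ ∂ν := lintegral_lintegral_swap hF.aemeasurable
    _ ≤ ∫⁻ _, ε ∂ν := lintegral_mono hFε
    _ = ε := by simp

theorem catoni_disintegrated_bound_general
    {Z H : Type*} [MeasurableSpace Z] [MeasurableSpace H]
    (m : ℕ) (hm : 0 < m)
    (D : Measure Z) [IsProbabilityMeasure D]
    (lam : Measure H)
    (ℓ : H → Z → ℝ) (hℓ : Measurable (Function.uncurry ℓ))
    (hℓ01 : ∀ h z, ℓ h z ∈ Set.Icc (0 : ℝ) 1)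
    (P : H → ℝ) (hPmeas : Measurable P)
    (Pm : Measure H) [IsProbabilityMeasure Pm]
    (hPm : Pm = lam.withDensity fun h => ENNReal.ofReal (P h))
    (Q : (Fin m → Z) → H → ℝ) (hPQ : ∀ S h, 0 < Q S h → 0 < P h)
    (κ : Kernel (Fin m → Z) H) [IsMarkovKernel κ]
    (hκ : ∀ S, κ S = lam.withDensity fun h => ENNReal.ofReal (Q S h))
    (c : ℝ) (hc : 0 < c)
    (δ : ℝ) (hδ : 0 < δ) :
    1 - ENNReal.ofReal δ ≤
      (Measure.pi (fun _ : Fin m => D) ⊗ₘ κ)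
        {p : (Fin m → Z) × H |
          trueRisk D ℓ p.2 ≤
            (1 / (1 - Real.exp (-c))) *
              (1 - Real.exp (-c * empRisk ℓ p.2 p.1
                - (1/m) * (Real.log (Q p.1 p.2 / P p.2) + Real.log (1/δ)))) } := by
  have hℓmeas (h : H) : AEMeasurable (ℓ h) D := hℓ.of_uncurry_left.aemeasurable
  have hweight (h : H) : ∫⁻ S : Fin m → Z, ENNReal.ofReal (δ * catoniWeight D (ℓ h) (-c) S)
      ∂Measure.pi (fun _ => D) ≤ ENNReal.ofReal δ := by
    simp only [ENNReal.ofReal_mul hδ.le]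
    rw [lintegral_const_mul' _ _ ENNReal.ofReal_ne_top]
    exact mul_le_of_le_one_right'
      (lintegral_catoniWeight_le_one (hℓmeas h) (ae_of_all _ (hℓ01 h)) _)
  -- `Q` may fail to be jointly measurable, so the event is measured by its outer measure.
  refine one_sub_le_measure_of_forall_subset_compl fun C hC hCbad => ?_
  refine compProd_le_of_density_le hPmeas.ennreal_ofReal hPm hκ
    ((measurable_catoniWeight hℓ (-c)).const_mul δ).ennreal_ofReal hweight hC fun S h hSh => ?_
  rcases le_or_gt (Q S h) 0 with hQ | hQ
  · -- The logarithm takes a junk value here, but `κ S` puts no mass on such `h`.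
    simp only [ENNReal.ofReal_of_nonpos hQ, zero_le]
  · have hP := hPQ S h hQ
    have hmgf := (bernoulliMGF_neg_lt_iff hc _ _).2 (not_le.1 (hCbad hSh))
    have hdensity := lt_mul_of_lt_exp_sub_log hm
      (bernoulliMGF_pos (integral_mem_Icc (hℓmeas h) (ae_of_all _ (hℓ01 h))) _)
      hQ hP hδ hmgf
    rw [← ENNReal.ofReal_mul hP.le]
    refine ENNReal.ofReal_le_ofReal ?_
    simpa only [catoniWeight, Fintype.card_fin] using hdensity.le

/-- **Disintegrated Catoni bound.**  For any fixed `c > 0` and `δ ∈ (0,1]`,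
with probability at least `1−δ` over `S ∼ D^m` and `h ∼ Q_S`,
`R_D^ℓ(h) ≤ (1/(1−e^{−c}))·{1 − exp(−c·R_S^ℓ(h) − (1/m)·[ln(Q_S(h)/P(h)) + ln(1/δ)])}`. -/
theorem catoni_disintegrated_bound
    {Z H : Type*} [MeasurableSpace Z] [MeasurableSpace H]
    (m : ℕ) (hm : 0 < m)
    (D : Measure Z) [IsProbabilityMeasure D]
    (lam : Measure H) [SigmaFinite lam]
    (ℓ : H → Z → ℝ) (hℓ : Measurable (Function.uncurry ℓ))
    (hℓ01 : ∀ h z, ℓ h z ∈ Set.Icc (0:ℝ) 1)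
    (P : H → ℝ) (hPpos : ∀ h, 0 < P h) (hPmeas : Measurable P)
    (Pm : Measure H) [IsProbabilityMeasure Pm]
    (hPm : Pm = lam.withDensity fun h => ENNReal.ofReal (P h))
    (Q : (Fin m → Z) → H → ℝ) (hQpos : ∀ S h, 0 < Q S h)
    (κ : Kernel (Fin m → Z) H) [IsMarkovKernel κ]
    (hκ : ∀ S, κ S = lam.withDensity fun h => ENNReal.ofReal (Q S h))
    (c : ℝ) (hc : 0 < c)
    (δ : ℝ) (hδ : δ ∈ Set.Ioc (0:ℝ) 1) :
    1 - ENNReal.ofReal δ ≤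
      (Measure.pi (fun _ : Fin m => D) ⊗ₘ κ)
        {p : (Fin m → Z) × H |
          trueRisk D ℓ p.2 ≤
            (1 / (1 - Real.exp (-c))) *
              (1 - Real.exp (-c * empRisk ℓ p.2 p.1
                - (1/m) * (Real.log (Q p.1 p.2 / P p.2) + Real.log (1/δ)))) } :=
  catoni_disintegrated_bound_general m hm D lam ℓ hℓ hℓ01 P hPmeas Pm hPm Q
    (fun _ h _ => hPpos h) κ hκ c hc δ hδ.1
end

section
/- Catoni bound for a general Gibbs posterior: For any probability measure D on Z, any loss ℓ : H × Z → [0,1], any prior density P on H, any measurable parametric function μ : H × Z^m → ℝ with finite positive Gibbs normalizer, any fixed c > 0, and any δ ∈ (0,1], with probability at least 1−δ over S ∼ D^m and h ∼ Q_S (Gibbs posterior for μ) one has R_D^ℓ(h) ≤ (1/(1−e^{−c}))·{ 1 − exp( −c·R_S^ℓ(h) − (1/m)·[ −μ(h,S) − ln P(h) − ln( E_{g∼P} (1/P(g))·e^{−μ(g,S)} ) + ln(1/δ) ] ) }. -/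
open MeasureTheory ProbabilityTheory

/-!
Markov's inequality applied to `exp (φ - r)`, where `r` is the log-density of the posterior with
respect to the prior, gives `φ ≤ r + log (1 / δ)` with probability at least `1 - δ`: weighting by
`exp (-r)` turns the data-dependent posterior back into the fixed prior, so that after Fubini only
`∫ exp (φ (S, h)) dD^m(S) ≤ 1` is needed for each fixed `h`. Catoni's choice is
`φ = m * (-log (1 - (1 - e⁻ᶜ) R_D(h)) - c R_S(h))`, whose exponential moment is at most `1` because
`e⁻ᶜˣ` lies below its chord on `[0, 1]`. For a Gibbs posterior the log-density is
`r = -μ - log P - log Z_S`.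
-/

section ExponentialMoment

variable {Z ι : Type*} [MeasurableSpace Z] [Fintype ι] {D : Measure Z} {X : Z → ℝ} {t x : ℝ}

lemma exp_mul_le_one_add_mul (hx : x ∈ Set.Icc (0 : ℝ) 1) :
    Real.exp (t * x) ≤ 1 + (Real.exp t - 1) * x := by
  have chord := convexOn_exp.2 (Set.mem_univ t) (Set.mem_univ 0) hx.1
    (sub_nonneg.2 hx.2) (add_sub_cancel x 1)
  simp only [smul_eq_mul, mul_zero, add_zero, Real.exp_zero, mul_one] at chord
  rw [mul_comm t x]
  linarith

lemma mgf_le_one_add_mul_integral [IsProbabilityMeasure D] (hX : AEMeasurable X D)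
    (hX01 : ∀ᵐ z ∂D, X z ∈ Set.Icc (0 : ℝ) 1) :
    mgf X D t ≤ 1 + (Real.exp t - 1) * ∫ z, X z ∂D := by
  have X_int : Integrable X D := .of_mem_Icc 0 1 hX hX01
  calc mgf X D t
    _ ≤ ∫ z, 1 + (Real.exp t - 1) * X z ∂D :=
      integral_mono_ae (integrable_exp_mul_of_mem_Icc hX hX01)
        ((integrable_const 1).add (X_int.const_mul _))
        (hX01.mono fun _ hz ↦ exp_mul_le_one_add_mul hz)
    _ = 1 + (Real.exp t - 1) * ∫ z, X z ∂D := by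
      rw [integral_add (integrable_const 1) (X_int.const_mul _), integral_const_mul]
      simp

lemma integrable_exp_mul_sum_pi [SigmaFinite D] (hX : Integrable (fun z ↦ Real.exp (t * X z)) D) :
    Integrable (fun S : ι → Z ↦ Real.exp (t * ∑ i, X (S i))) (Measure.pi fun _ ↦ D) := by
  simp_rw [Finset.mul_sum, Real.exp_sum]
  exact Integrable.fintype_prod fun _ ↦ hX

lemma mgf_sum_pi [SigmaFinite D] :
    mgf (fun S : ι → Z ↦ ∑ i, X (S i)) (Measure.pi fun _ ↦ D) t = mgf X D t ^ Fintype.card ι := by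
  simp_rw [mgf, Finset.mul_sum, Real.exp_sum]
  exact integral_fintype_prod_eq_pow fun z ↦ Real.exp (t * X z)

end ExponentialMoment

section ChangeOfMeasure

variable {Ω H : Type*} [MeasurableSpace Ω] [MeasurableSpace H]

lemma one_sub_le_measure_le_log_one_div {ν : Measure Ω} [IsProbabilityMeasure ν] {f : Ω → ℝ}
    (hf : Measurable f) (hexp : ∫⁻ ω, ENNReal.ofReal (Real.exp (f ω)) ∂ν ≤ 1)
    {δ : ℝ} (hδ : 0 < δ) :
    1 - ENNReal.ofReal δ ≤ ν {ω | f ω ≤ Real.log (1 / δ)} := by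
  have markov : ν {ω | f ω ≤ Real.log (1 / δ)}ᶜ ≤ ENNReal.ofReal δ :=
    calc ν {ω | f ω ≤ Real.log (1 / δ)}ᶜ
      _ ≤ ν {ω | ENNReal.ofReal (1 / δ) ≤ ENNReal.ofReal (Real.exp (f ω))} := by
        refine measure_mono fun ω hω ↦ ENNReal.ofReal_le_ofReal ?_
        exact ((Real.log_lt_iff_lt_exp (one_div_pos.2 hδ)).1 (not_le.1 hω)).le
      _ ≤ (∫⁻ ω, ENNReal.ofReal (Real.exp (f ω)) ∂ν) / ENNReal.ofReal (1 / δ) :=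
        meas_ge_le_lintegral_div (by fun_prop) (by simpa using hδ) ENNReal.ofReal_ne_top
      _ ≤ 1 / ENNReal.ofReal (1 / δ) := by gcongr
      _ = ENNReal.ofReal δ := by
        rw [one_div δ, ENNReal.ofReal_inv_of_pos hδ, one_div, inv_inv]
  rw [tsub_le_iff_right,
    ← prob_add_prob_compl (μ := ν) (measurableSet_le hf measurable_const)]
  gcongr

variable {ρ : Measure Ω} {P : Measure H} {κ : Kernel Ω H} {r φ : Ω × H → ℝ}

lemma lintegral_exp_sub_compProd [SFinite ρ] [SFinite P] [IsSFiniteKernel κ]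
    (hr : Measurable r) (hφ : Measurable φ)
    (hκ : ∀ ω, κ ω = P.withDensity fun h ↦ ENNReal.ofReal (Real.exp (r (ω, h)))) :
    ∫⁻ p, ENNReal.ofReal (Real.exp (φ p - r p)) ∂(ρ ⊗ₘ κ) =
      ∫⁻ h, ∫⁻ ω, ENNReal.ofReal (Real.exp (φ (ω, h))) ∂ρ ∂P := by
  have density_cancels (ω : Ω) : ∫⁻ h, ENNReal.ofReal (Real.exp (φ (ω, h) - r (ω, h))) ∂κ ω =
      ∫⁻ h, ENNReal.ofReal (Real.exp (φ (ω, h))) ∂P := by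
    rw [hκ, lintegral_withDensity_eq_lintegral_mul _ (by fun_prop) (by fun_prop)]
    refine lintegral_congr fun h ↦ ?_
    rw [Pi.mul_apply, ← ENNReal.ofReal_mul (Real.exp_nonneg _), ← Real.exp_add, add_sub_cancel]
  rw [Measure.lintegral_compProd (by fun_prop)]
  simp_rw [density_cancels]
  exact lintegral_lintegral_swap (by fun_prop)

theorem one_sub_le_compProd_le_add_log_one_div [IsProbabilityMeasure ρ] [IsProbabilityMeasure P]
    [IsMarkovKernel κ] (hr : Measurable r) (hφ : Measurable φ)
    (hκ : ∀ ω, κ ω = P.withDensity fun h ↦ ENNReal.ofReal (Real.exp (r (ω, h))))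
    (hexp : ∀ᵐ h ∂P, ∫⁻ ω, ENNReal.ofReal (Real.exp (φ (ω, h))) ∂ρ ≤ 1) {δ : ℝ} (hδ : 0 < δ) :
    1 - ENNReal.ofReal δ ≤ (ρ ⊗ₘ κ) {p | φ p ≤ r p + Real.log (1 / δ)} := by
  simp_rw [← sub_le_iff_le_add']
  refine one_sub_le_measure_le_log_one_div (hφ.sub hr) ?_ hδ
  calc ∫⁻ p, ENNReal.ofReal (Real.exp (φ p - r p)) ∂(ρ ⊗ₘ κ)
    _ = ∫⁻ h, ∫⁻ ω, ENNReal.ofReal (Real.exp (φ (ω, h))) ∂ρ ∂P :=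
      lintegral_exp_sub_compProd hr hφ hκ
    _ ≤ ∫⁻ _, 1 ∂P := lintegral_mono_ae hexp
    _ = 1 := by simp

end ChangeOfMeasure

section WithDensity

variable {H : Type*} [MeasurableSpace H] {lam : Measure H} {p q : H → ℝ}

lemma integral_one_div_mul_withDensity (hp : Measurable p) (hppos : ∀ h, 0 < p h) (f : H → ℝ) :
    ∫ h, 1 / p h * f h ∂(lam.withDensity fun h ↦ ENNReal.ofReal (p h)) = ∫ h, f h ∂lam := by
  rw [integral_withDensity_eq_integral_toReal_smul hp.ennreal_ofReal
    (ae_of_all _ fun _ ↦ ENNReal.ofReal_lt_top)]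
  refine integral_congr_ae (ae_of_all _ fun h ↦ ?_)
  simp only [ENNReal.toReal_ofReal (hppos h).le, smul_eq_mul]
  rw [← mul_assoc, mul_one_div_cancel (hppos h).ne', one_mul]

lemma withDensity_eq_withDensity_exp_log_sub_log (hp : Measurable p) (hq : Measurable q)
    (hppos : ∀ h, 0 < p h) (hqpos : ∀ h, 0 < q h) :
    lam.withDensity (fun h ↦ ENNReal.ofReal (q h)) =
      (lam.withDensity fun h ↦ ENNReal.ofReal (p h)).withDensity
        fun h ↦ ENNReal.ofReal (Real.exp (Real.log (q h) - Real.log (p h))) := by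
  rw [← withDensity_mul _ (by fun_prop) (by fun_prop)]
  congr 1 with h
  rw [Pi.mul_apply, ← ENNReal.ofReal_mul (hppos h).le, Real.exp_sub, Real.exp_log (hppos h),
    Real.exp_log (hqpos h), mul_div_cancel₀ _ (hppos h).ne']

lemma gibbs_withDensity_eq_withDensity_exp {u : H → ℝ} (hu : Measurable u) (hp : Measurable p)
    (hppos : ∀ h, 0 < p h) (hZpos : 0 < ∫ g, Real.exp (-(u g)) ∂lam) :
    lam.withDensity (fun h ↦ ENNReal.ofReal (Real.exp (-(u h)) / ∫ g, Real.exp (-(u g)) ∂lam)) =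
      (lam.withDensity fun h ↦ ENNReal.ofReal (p h)).withDensity fun h ↦ ENNReal.ofReal
        (Real.exp (-(u h) - Real.log (p h) - Real.log (∫ g, Real.exp (-(u g)) ∂lam))) := by
  rw [withDensity_eq_withDensity_exp_log_sub_log hp (by fun_prop) hppos
    fun h ↦ div_pos (Real.exp_pos _) hZpos]
  simp_rw [Real.log_div (Real.exp_ne_zero _) hZpos.ne', Real.log_exp, sub_right_comm]

end WithDensity

section CatoniDeviation

/-- Catoni's deviation `Δ_c(R, r) = -ln(1 - (1 - e^{-c}) R) - c r` between a true risk `R` and an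
empirical risk `r`. The argument of the logarithm is positive when `R ∈ [0, 1]`. -/
noncomputable def catoniDeviation (c R r : ℝ) : ℝ :=
  -Real.log (1 - (1 - Real.exp (-c)) * R) - c * r

variable {c R r x : ℝ}

lemma one_sub_one_sub_exp_neg_mul_pos (hR : R ∈ Set.Icc (0 : ℝ) 1) :
    0 < 1 - (1 - Real.exp (-c)) * R := by
  linarith [exp_mul_le_one_add_mul (t := -c) hR, Real.exp_pos (-c * R)]

lemma exp_nat_mul_catoniDeviation (n : ℕ) (hR : R ∈ Set.Icc (0 : ℝ) 1) :
    Real.exp (n * catoniDeviation c R r) =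
      Real.exp (-c * (n * r)) / (1 - (1 - Real.exp (-c)) * R) ^ n := by
  rw [catoniDeviation, mul_sub, sub_eq_neg_add, Real.exp_add, mul_neg,
    Real.exp_neg (n * Real.log _), Real.exp_nat_mul,
    Real.exp_log (one_sub_one_sub_exp_neg_mul_pos hR), ← div_eq_mul_inv]
  congr 2
  ring

lemma le_of_catoniDeviation_le (hc : 0 < c) (hR : R ∈ Set.Icc (0 : ℝ) 1)
    (hx : catoniDeviation c R r ≤ x) :
    R ≤ 1 / (1 - Real.exp (-c)) * (1 - Real.exp (-c * r - x)) := by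
  have one_sub_exp_pos : 0 < 1 - Real.exp (-c) := by simpa using hc
  have exp_le : Real.exp (-c * r - x) ≤ 1 - (1 - Real.exp (-c)) * R := by
    rw [← Real.le_log_iff_exp_le (one_sub_one_sub_exp_neg_mul_pos hR)]
    rw [catoniDeviation] at hx
    linarith
  rw [one_div_mul_eq_div, le_div_iff₀ one_sub_exp_pos]
  linarith

end CatoniDeviation

section Risk

variable {Z H : Type*} {m : ℕ} {ℓ : H → Z → ℝ}

lemma nat_mul_empRisk (h : H) (S : Fin m → Z) : m * empRisk ℓ h S = ∑ i, ℓ h (S i) := by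
  obtain rfl | hm := m.eq_zero_or_pos
  · simp
  · exact mul_div_cancel₀ _ (Nat.cast_ne_zero.2 hm.ne')

variable [MeasurableSpace Z] {D : Measure Z}

lemma trueRisk_mem_Icc [IsProbabilityMeasure D] {h : H} (hℓ : AEMeasurable (ℓ h) D)
    (hℓ01 : ∀ᵐ z ∂D, ℓ h z ∈ Set.Icc (0 : ℝ) 1) : trueRisk D ℓ h ∈ Set.Icc (0 : ℝ) 1 :=
  (convex_Icc 0 1).integral_mem isClosed_Icc hℓ01 (.of_mem_Icc 0 1 hℓ hℓ01)

lemma lintegral_exp_mul_catoniDeviation_le_one [IsProbabilityMeasure D] {h : H} (c : ℝ)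
    (hℓ : AEMeasurable (ℓ h) D) (hℓ01 : ∀ᵐ z ∂D, ℓ h z ∈ Set.Icc (0 : ℝ) 1) :
    ∫⁻ S : Fin m → Z,
      ENNReal.ofReal (Real.exp (m * catoniDeviation c (trueRisk D ℓ h) (empRisk ℓ h S)))
      ∂(Measure.pi fun _ ↦ D) ≤ 1 := by
  have risk_mem := trueRisk_mem_Icc hℓ hℓ01
  have base_pos := one_sub_one_sub_exp_neg_mul_pos (c := c) risk_mem
  have mgf_le : mgf (ℓ h) D (-c) ≤ 1 - (1 - Real.exp (-c)) * trueRisk D ℓ h := by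
    rw [trueRisk, sub_eq_add_neg, ← neg_mul, neg_sub]
    exact mgf_le_one_add_mul_integral hℓ hℓ01
  have sum_int := integrable_exp_mul_sum_pi (ι := Fin m)
    (integrable_exp_mul_of_mem_Icc (t := -c) hℓ hℓ01)
  simp_rw [exp_nat_mul_catoniDeviation m risk_mem, nat_mul_empRisk]
  rw [← ofReal_integral_eq_lintegral_ofReal (sum_int.div_const _)
    (ae_of_all _ fun S ↦ by positivity), ENNReal.ofReal_le_one, integral_div,
    div_le_one (by positivity)]
  calc mgf (fun S : Fin m → Z ↦ ∑ i, ℓ h (S i)) (Measure.pi fun _ ↦ D) (-c)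
    _ = mgf (ℓ h) D (-c) ^ m := by rw [mgf_sum_pi, Fintype.card_fin]
    _ ≤ (1 - (1 - Real.exp (-c)) * trueRisk D ℓ h) ^ m := pow_le_pow_left₀ mgf_nonneg mgf_le m

variable [MeasurableSpace H]

lemma measurable_trueRisk [SFinite D] (hℓ : Measurable (Function.uncurry ℓ)) :
    Measurable (trueRisk D ℓ) :=
  hℓ.stronglyMeasurable.integral_prod_right.measurable

lemma measurable_empRisk (hℓ : Measurable (Function.uncurry ℓ)) :
    Measurable fun p : (Fin m → Z) × H ↦ empRisk ℓ p.2 p.1 := by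
  have loss_meas (i : Fin m) : Measurable fun p : (Fin m → Z) × H ↦ ℓ p.2 (p.1 i) :=
    hℓ.comp (by fun_prop : Measurable fun p : (Fin m → Z) × H ↦ (p.2, p.1 i))
  exact (Finset.measurable_sum _ fun i _ ↦ loss_meas i).div_const _

theorem one_sub_le_compProd_trueRisk_le [IsProbabilityMeasure D] (hm : 0 < m)
    (hℓ : Measurable (Function.uncurry ℓ)) (hℓ01 : ∀ h z, ℓ h z ∈ Set.Icc (0 : ℝ) 1)
    {P : Measure H} [IsProbabilityMeasure P] {κ : Kernel (Fin m → Z) H} [IsMarkovKernel κ]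
    {r : (Fin m → Z) × H → ℝ} (hr : Measurable r)
    (hκ : ∀ S, κ S = P.withDensity fun h ↦ ENNReal.ofReal (Real.exp (r (S, h))))
    {c : ℝ} (hc : 0 < c) {δ : ℝ} (hδ : 0 < δ) :
    1 - ENNReal.ofReal δ ≤ (Measure.pi (fun _ : Fin m ↦ D) ⊗ₘ κ)
      {p | trueRisk D ℓ p.2 ≤ 1 / (1 - Real.exp (-c)) *
        (1 - Real.exp (-c * empRisk ℓ p.2 p.1 - 1 / m * (r p + Real.log (1 / δ))))} := by
  have loss_meas (h : H) : AEMeasurable (ℓ h) D := (hℓ.comp measurable_prodMk_left).aemeasurable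
  have loss_mem (h : H) : ∀ᵐ z ∂D, ℓ h z ∈ Set.Icc (0 : ℝ) 1 := ae_of_all _ (hℓ01 h)
  have trueRisk_meas : Measurable (trueRisk D ℓ) := measurable_trueRisk hℓ
  have empRisk_meas := measurable_empRisk (m := m) hℓ
  have deviation_meas : Measurable fun p : (Fin m → Z) × H ↦
      m * catoniDeviation c (trueRisk D ℓ p.2) (empRisk ℓ p.2 p.1) := by
    unfold catoniDeviation
    fun_prop
  refine (one_sub_le_compProd_le_add_log_one_div hr deviation_meas hκ (ae_of_all _ fun h ↦
    lintegral_exp_mul_catoniDeviation_le_one c (loss_meas h) (loss_mem h)) hδ).trans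
    (measure_mono fun p hp ↦ ?_)
  refine le_of_catoniDeviation_le hc (trueRisk_mem_Icc (loss_meas p.2) (loss_mem p.2)) ?_
  rw [one_div_mul_eq_div]
  exact (le_div_iff₀' (Nat.cast_pos.2 hm)).2 hp

end Risk

/-- **Catoni bound for a general Gibbs posterior.**  For any fixed `c > 0`,
with probability at least `1−δ` over `S ∼ D^m` and `h ∼ Q_S` (Gibbs posterior
for `μ`),
`R_D^ℓ(h) ≤ (1/(1−e^{−c}))·{1 − exp(−c·R_S^ℓ(h) − (1/m)·[−μ(h,S) − ln P(h)
  − ln(E_{g∼P} (1/P(g))·e^{−μ(g,S)}) + ln(1/δ)])}`. -/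
theorem catoni_gibbs_posterior_bound
    {Z H : Type*} [MeasurableSpace Z] [MeasurableSpace H]
    (m : ℕ) (hm : 0 < m)
    (D : Measure Z) [IsProbabilityMeasure D]
    (lam : Measure H) [SigmaFinite lam]
    (ℓ : H → Z → ℝ) (hℓ : Measurable (Function.uncurry ℓ))
    (hℓ01 : ∀ h z, ℓ h z ∈ Set.Icc (0:ℝ) 1)
    (P : H → ℝ) (hPpos : ∀ h, 0 < P h) (hPmeas : Measurable P)
    (Pm : Measure H) [IsProbabilityMeasure Pm]
    (hPm : Pm = lam.withDensity fun h => ENNReal.ofReal (P h))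
    (μ : H → (Fin m → Z) → ℝ) (hμ : Measurable (Function.uncurry μ))
    (hμint : ∀ S, Integrable (fun g => Real.exp (-(μ g S))) lam)
    (hZpos : ∀ S : Fin m → Z, 0 < ∫ g, Real.exp (-(μ g S)) ∂lam)
    (κ : Kernel (Fin m → Z) H) [IsMarkovKernel κ]
    (hκ : ∀ S, κ S = lam.withDensity fun h =>
      ENNReal.ofReal (Real.exp (-(μ h S)) / ∫ g, Real.exp (-(μ g S)) ∂lam))
    (c : ℝ) (hc : 0 < c)
    (δ : ℝ) (hδ : δ ∈ Set.Ioc (0:ℝ) 1) :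
    1 - ENNReal.ofReal δ ≤
      (Measure.pi (fun _ : Fin m => D) ⊗ₘ κ)
        {p : (Fin m → Z) × H |
          trueRisk D ℓ p.2 ≤
            (1 / (1 - Real.exp (-c))) *
              (1 - Real.exp (-c * empRisk ℓ p.2 p.1
                - (1/m) * (-(μ p.2 p.1) - Real.log (P p.2)
                  - Real.log (∫ g, (1 / P g) * Real.exp (-(μ g p.1)) ∂Pm)
                  + Real.log (1/δ)))) } := by
  subst hPm
  simp_rw [integral_one_div_mul_withDensity hPmeas hPpos]
  have energy_meas : Measurable fun p : (Fin m → Z) × H ↦ μ p.2 p.1 := hμ.comp measurable_swap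
  have normalizer_meas : Measurable fun S ↦ ∫ g, Real.exp (-(μ g S)) ∂lam :=
    (Real.measurable_exp.comp hμ.neg).stronglyMeasurable.integral_prod_left'.measurable
  have log_density_meas : Measurable fun p : (Fin m → Z) × H ↦
      -(μ p.2 p.1) - Real.log (P p.2) - Real.log (∫ g, Real.exp (-(μ g p.1)) ∂lam) :=
    (energy_meas.neg.sub (hPmeas.comp measurable_snd).log).sub
      (normalizer_meas.comp measurable_fst).log
  exact one_sub_le_compProd_trueRisk_le hm hℓ hℓ01 log_density_meas
    (fun S ↦ (hκ S).trans (gibbs_withDensity_eq_withDensity_exp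
      (energy_meas.comp measurable_prodMk_left) hPmeas hPpos (hZpos S))) hc hδ.1
end

section
/- Optimized Catoni form equals the inverse binary KL: For every q ∈ [0,1] and every τ > 0, the infimum over c > 0 of (1/(1−e^{−c}))·(1 − exp(−c·q − τ)) equals kl̄[q | τ], where kl̄[q | τ] = sup{ p ∈ (0,1) : kl(q‖p) ≤ τ }. -/
/-- The binary KL divergence `kl(q‖p) = q ln(q/p) + (1−q) ln((1−q)/(1−p))`
(with the conventions `0·ln 0 = 0`, which hold automatically since
`Real.log 0 = 0`). -/
noncomputable def binKL (q p : ℝ) : ℝ :=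
  q * Real.log (q / p) + (1 - q) * Real.log ((1 - q) / (1 - p))

/-!
Tilting the Bernoulli law with parameter `p` by `e^{-cX}` gives the Bernoulli law with parameter
`p_c = p e^{-c} / Z`, where `Z = 1 - p + p e^{-c}`, and
`kl(q‖p) - kl(q‖p_c) = -cq - log Z`. Since `p ≤ (1 - e^{-cq-τ}) / (1 - e^{-c})` rearranges to
`e^{-cq-τ} ≤ Z`, it is equivalent to `kl(q‖p) - kl(q‖p_c) ≤ τ`. If `kl(q‖p) ≤ τ`, this holds for
every `c` because `kl(q‖p_c) ≥ 0`. If instead `kl(q‖p) > τ` and `p > q`, it fails for a suitable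
`c > 0`: as `c` ranges over `(0, ∞)`, the parameter `p_c` ranges over `(0, p)`, so `kl(q‖p_c)` can
be made arbitrarily small.
-/

open Set Filter Topology

theorem nhdsWithin_Ioo_neBot_of_mem_Icc {α : Type*} [TopologicalSpace α] [LinearOrder α]
    [OrderTopology α] [DenselyOrdered α] {a b x : α} (hab : a ≠ b) (hx : x ∈ Icc a b) :
    (𝓝[Ioo a b] x).NeBot :=
  mem_closure_iff_nhdsWithin_neBot.1 (by rwa [closure_Ioo hab])

section BinKL

theorem mul_log_div (x : ℝ) {y : ℝ} (hy : y ≠ 0) :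
    x * Real.log (x / y) = x * Real.log x - x * Real.log y := by
  rcases eq_or_ne x 0 with rfl | hx
  · simp
  · rw [Real.log_div hx hy, mul_sub]

theorem continuousAt_mul_log_div_self (x : ℝ) :
    ContinuousAt (fun y => x * Real.log (x / y)) x := by
  rcases eq_or_ne x 0 with rfl | hx
  · simpa only [zero_mul] using continuousAt_const
  · exact continuousAt_const.mul
      ((continuousAt_const.div continuousAt_id hx).log (div_ne_zero hx hx))

theorem binKL_eq_klFun (q : ℝ) {p : ℝ} (hp₀ : p ≠ 0) (hp₁ : 1 - p ≠ 0) :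
    binKL q p = p * InformationTheory.klFun (q / p) +
      (1 - p) * InformationTheory.klFun ((1 - q) / (1 - p)) := by
  unfold binKL InformationTheory.klFun
  field_simp
  ring

theorem binKL_nonneg {q p : ℝ} (hq : q ∈ Icc 0 1) (hp : p ∈ Ioo 0 1) : 0 ≤ binKL q p := by
  have hp₁ : 0 < 1 - p := sub_pos.2 hp.2
  rw [binKL_eq_klFun q hp.1.ne' hp₁.ne']
  exact add_nonneg
    (mul_nonneg hp.1.le (InformationTheory.klFun_nonneg (div_nonneg hq.1 hp.1.le)))
    (mul_nonneg hp₁.le (InformationTheory.klFun_nonneg (div_nonneg (sub_nonneg.2 hq.2) hp₁.le)))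

theorem binKL_self (q : ℝ) : binKL q q = 0 := by
  have log_div_self (x : ℝ) : Real.log (x / x) = 0 := by
    rcases eq_or_ne x 0 with rfl | hx <;> simp [*]
  simp [binKL, log_div_self]

theorem continuousAt_binKL_self (q : ℝ) : ContinuousAt (binKL q) q :=
  (continuousAt_mul_log_div_self q).add
    ((continuousAt_mul_log_div_self (1 - q)).comp (f := fun p => 1 - p) (by fun_prop))

theorem eventually_binKL_lt (q : ℝ) {ε : ℝ} (hε : 0 < ε) : ∀ᶠ p in 𝓝 q, binKL q p < ε :=
  (continuousAt_binKL_self q).eventually_lt continuousAt_const (by rwa [binKL_self])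

end BinKL

section InvBinKL

/-- The parameters `p ∈ (0,1)` with `kl(q‖p) ≤ τ`. -/
def binKLSublevel (q τ : ℝ) : Set ℝ :=
  {p | p ∈ Ioo (0 : ℝ) 1 ∧ binKL q p ≤ τ}

/-- The inverse binary KL divergence `kl̄[q | τ]`. -/
noncomputable def invBinKL (q τ : ℝ) : ℝ :=
  sSup (binKLSublevel q τ)

variable {q τ : ℝ}

theorem bddAbove_binKLSublevel (q τ : ℝ) : BddAbove (binKLSublevel q τ) :=
  ⟨1, fun _ hp => hp.1.2.le⟩

theorem eventually_mem_binKLSublevel (q : ℝ) (hτ : 0 < τ) :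
    ∀ᶠ p in 𝓝[Ioo 0 1] q, p ∈ binKLSublevel q τ := by
  filter_upwards [self_mem_nhdsWithin, nhdsWithin_le_nhds (eventually_binKL_lt q hτ)]
    with p hp hpτ using ⟨hp, hpτ.le⟩

theorem binKLSublevel_nonempty (hq : q ∈ Icc 0 1) (hτ : 0 < τ) :
    (binKLSublevel q τ).Nonempty :=
  have := nhdsWithin_Ioo_neBot_of_mem_Icc zero_ne_one hq
  (eventually_mem_binKLSublevel q hτ).exists

theorem le_invBinKL (hq : q ∈ Icc 0 1) (hτ : 0 < τ) : q ≤ invBinKL q τ :=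
  have := nhdsWithin_Ioo_neBot_of_mem_Icc zero_ne_one hq
  le_of_tendsto (tendsto_id.mono_left nhdsWithin_le_nhds)
    ((eventually_mem_binKLSublevel q hτ).mono fun _ hp => le_csSup (bddAbove_binKLSublevel q τ) hp)

theorem lt_binKL_of_invBinKL_lt {p : ℝ} (hp : p ∈ Ioo 0 1) (h : invBinKL q τ < p) :
    τ < binKL q p := by
  by_contra! hle
  exact h.not_ge (le_csSup (bddAbove_binKLSublevel q τ) ⟨hp, hle⟩)

end InvBinKL

section Tilting

/-- The Laplace transform `𝔼[e^{-cX}]` of a Bernoulli variable `X` with parameter `p`. -/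
noncomputable def bernoulliLaplace (p c : ℝ) : ℝ :=
  1 - p + p * Real.exp (-c)

/-- The parameter of the Bernoulli law with parameter `p` tilted by `e^{-cX}`. -/
noncomputable def bernoulliTilt (p c : ℝ) : ℝ :=
  p * Real.exp (-c) / bernoulliLaplace p c

variable {p : ℝ}

theorem bernoulliLaplace_pos (hp : p ∈ Ioo 0 1) (c : ℝ) : 0 < bernoulliLaplace p c :=
  add_pos (sub_pos.2 hp.2) (mul_pos hp.1 (Real.exp_pos _))

theorem one_sub_bernoulliTilt {c : ℝ} (hZ : bernoulliLaplace p c ≠ 0) :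
    1 - bernoulliTilt p c = (1 - p) / bernoulliLaplace p c := by
  rw [bernoulliTilt, one_sub_div hZ, bernoulliLaplace, add_sub_cancel_right]

theorem bernoulliTilt_mem_Ioo (hp : p ∈ Ioo 0 1) (c : ℝ) : bernoulliTilt p c ∈ Ioo 0 1 := by
  have hZ := bernoulliLaplace_pos hp c
  refine ⟨div_pos (mul_pos hp.1 (Real.exp_pos _)) hZ, sub_pos.1 ?_⟩
  rw [one_sub_bernoulliTilt hZ.ne']
  exact div_pos (sub_pos.2 hp.2) hZ

theorem binKL_sub_binKL_bernoulliTilt (hp : p ∈ Ioo 0 1) (q c : ℝ) :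
    binKL q p - binKL q (bernoulliTilt p c) = -(c * q) - Real.log (bernoulliLaplace p c) := by
  have hp₁ : 1 - p ≠ 0 := (sub_pos.2 hp.2).ne'
  have hZ := (bernoulliLaplace_pos hp c).ne'
  have ht := bernoulliTilt_mem_Ioo hp c
  have log_tilt : Real.log (bernoulliTilt p c) =
      Real.log p - c - Real.log (bernoulliLaplace p c) := by
    rw [bernoulliTilt, Real.log_div (mul_ne_zero hp.1.ne' (Real.exp_ne_zero _)) hZ,
      Real.log_mul hp.1.ne' (Real.exp_ne_zero _), Real.log_exp, ← sub_eq_add_neg]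
  have log_one_sub_tilt : Real.log (1 - bernoulliTilt p c) =
      Real.log (1 - p) - Real.log (bernoulliLaplace p c) := by
    rw [one_sub_bernoulliTilt hZ, Real.log_div hp₁ hZ]
  rw [binKL, binKL, mul_log_div q hp.1.ne', mul_log_div (1 - q) hp₁, mul_log_div q ht.1.ne',
    mul_log_div (1 - q) (sub_pos.2 ht.2).ne', log_tilt, log_one_sub_tilt]
  ring

theorem exists_bernoulliTilt_eq {t : ℝ} (ht : 0 < t) (htp : t < p) (hp : p < 1) :
    ∃ c, 0 < c ∧ bernoulliTilt p c = t := by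
  have hp₀ : 0 < p := ht.trans htp
  have hp₁ : 0 < 1 - p := sub_pos.2 hp
  have ht₁ : 0 < 1 - t := sub_pos.2 (htp.trans hp)
  -- The witness is the difference of the log-odds of `p` and `t`.
  refine ⟨Real.log (p * (1 - t) / (t * (1 - p))), Real.log_pos ?_, ?_⟩
  · rw [one_lt_div (by positivity)]
    linarith
  · rw [bernoulliTilt, bernoulliLaplace, Real.exp_neg, Real.exp_log (by positivity)]
    field_simp
    ring

end Tilting

section CatoniBound

/-- The Catoni form with parameter `c`, whose infimum over `c > 0` is `kl̄[q | τ]`. -/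
noncomputable def catoniBound (q τ c : ℝ) : ℝ :=
  (1 / (1 - Real.exp (-c))) * (1 - Real.exp (-(c * q) - τ))

variable {q p τ c : ℝ}

theorem le_catoniBound_iff_exp_le (hc : 0 < c) :
    p ≤ catoniBound q τ c ↔ Real.exp (-(c * q) - τ) ≤ bernoulliLaplace p c := by
  have hexp : 0 < 1 - Real.exp (-c) := sub_pos.2 (Real.exp_lt_one_iff.2 (neg_lt_zero.2 hc))
  rw [catoniBound, bernoulliLaplace, one_div_mul_eq_div, le_div_iff₀ hexp]
  constructor <;> intro h <;> linarith

theorem le_catoniBound_iff (hp : p ∈ Ioo 0 1) (hc : 0 < c) :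
    p ≤ catoniBound q τ c ↔ binKL q p - binKL q (bernoulliTilt p c) ≤ τ := by
  rw [le_catoniBound_iff_exp_le hc, ← Real.le_log_iff_exp_le (bernoulliLaplace_pos hp c),
    binKL_sub_binKL_bernoulliTilt hp, sub_le_comm]

theorem invBinKL_le_catoniBound (hq : q ∈ Icc 0 1) (hτ : 0 < τ) (hc : 0 < c) :
    invBinKL q τ ≤ catoniBound q τ c := by
  refine csSup_le (binKLSublevel_nonempty hq hτ) fun p ⟨hp, hpτ⟩ => ?_
  rw [le_catoniBound_iff hp hc]
  exact (sub_le_self _ (binKL_nonneg hq (bernoulliTilt_mem_Ioo hp c))).trans hpτ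

theorem exists_catoniBound_lt (hq : 0 ≤ q) (hqp : q < p) (hp : p < 1) (hτ : τ < binKL q p) :
    ∃ c, 0 < c ∧ catoniBound q τ c < p := by
  have := nhdsWithin_Ioo_neBot_of_mem_Icc zero_ne_one ⟨hq, (hqp.trans hp).le⟩
  obtain ⟨t, ht, htp, htτ⟩ : ∃ t ∈ Ioo 0 1, t < p ∧ binKL q t < binKL q p - τ :=
    (eventually_mem_nhdsWithin.and (nhdsWithin_le_nhds
      ((eventually_lt_nhds hqp).and (eventually_binKL_lt q (sub_pos.2 hτ))))).exists
  obtain ⟨c, hc, rfl⟩ := exists_bernoulliTilt_eq ht.1 htp hp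
  refine ⟨c, hc, ?_⟩
  rw [← not_le, le_catoniBound_iff ⟨hq.trans_lt hqp, hp⟩ hc, not_le]
  exact lt_sub_comm.1 htτ

theorem catoniBound_le (q τ : ℝ) (hc : 0 < c) : catoniBound q τ c ≤ 1 / (1 - Real.exp (-c)) :=
  mul_le_of_le_one_right
    (one_div_nonneg.2 (sub_nonneg.2 (Real.exp_le_one_iff.2 (neg_nonpos.2 hc.le))))
    (sub_le_self _ (Real.exp_pos _).le)

theorem le_one_of_forall_le_catoniBound {b : ℝ} (hb : ∀ c, 0 < c → b ≤ catoniBound q τ c) :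
    b ≤ 1 := by
  have hlim : Tendsto (fun c => 1 / (1 - Real.exp (-c))) atTop (𝓝 1) := by
    simpa using (Real.tendsto_exp_neg_atTop_nhds_zero.const_sub 1).inv₀ (by norm_num)
  refine ge_of_tendsto hlim ?_
  filter_upwards [eventually_gt_atTop 0] with c hc using (hb c hc).trans (catoniBound_le q τ hc)

theorem le_invBinKL_of_forall_le_catoniBound {b : ℝ} (hq : q ∈ Icc 0 1) (hτ : 0 < τ)
    (hb : ∀ c, 0 < c → b ≤ catoniBound q τ c) : b ≤ invBinKL q τ := by
  by_contra! hlt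
  obtain ⟨p, hp, hpb⟩ := exists_between hlt
  have hqp : q < p := (le_invBinKL hq hτ).trans_lt hp
  have hp₁ : p < 1 := hpb.trans_le (le_one_of_forall_le_catoniBound hb)
  have hpτ : τ < binKL q p := lt_binKL_of_invBinKL_lt ⟨hq.1.trans_lt hqp, hp₁⟩ hp
  obtain ⟨c, hc, hcp⟩ := exists_catoniBound_lt hq.1 hqp hp₁ hpτ
  exact (hcp.trans hpb).not_ge (hb c hc)

end CatoniBound

/-- **Optimized Catoni form equals the inverse binary KL.**  For every
`q ∈ [0,1]` and every `τ > 0`, the infimum over `c > 0` of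
`(1/(1−e^{−c}))·(1 − exp(−c·q − τ))` equals
`kl̄[q|τ] = sup{ p ∈ (0,1) : kl(q‖p) ≤ τ }`. -/
theorem catoni_infimum_eq_invBinKL
    (q τ : ℝ) (hq : q ∈ Set.Icc (0:ℝ) 1) (hτ : 0 < τ) :
    sInf ((fun c : ℝ =>
        (1 / (1 - Real.exp (-c))) * (1 - Real.exp (-(c * q) - τ))) ''
      Set.Ioi (0:ℝ)) =
    sSup {p : ℝ | p ∈ Set.Ioo (0:ℝ) 1 ∧ binKL q p ≤ τ} := by
  have hglb : IsGLB (catoniBound q τ '' Ioi 0) (invBinKL q τ) := by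
    constructor
    · rintro _ ⟨c, hc, rfl⟩
      exact invBinKL_le_catoniBound hq hτ hc
    · intro b hb
      exact le_invBinKL_of_forall_le_catoniBound hq hτ fun c hc => hb (mem_image_of_mem _ hc)
  exact hglb.csInf_eq (nonempty_Ioi.image _)
end

section
/- Pointwise bound on the disintegrated KL between two Gibbs densities: Let μ : H × Z^m → ℝ and ω : H → ℝ be measurable with finite positive Gibbs normalizers, and let Q_S have density proportional to e^{−μ(h,S)} and P have density proportional to e^{−ω(h)} with respect to λ. Then for every S ∈ Z^m and every h ∈ H, ln₊( Q_S(h)/P(h) ) ≤ [ ω(h) − μ(h,S) ]₊ + [ E_{h′∼P}( μ(h′,S) − ω(h′) ) ]₊, provided μ(·,S) − ω is P-integrable. -/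
open MeasureTheory

/-!
The prior is the exponential tilting of `lam` by `-ω`, and the ratio of the two normalizers is the
exponential moment `E_{h′∼P} exp (ω h′ - μ h′ S)`. By Jensen's inequality its logarithm is at least
`E_{h′∼P} (ω h′ - μ h′ S)`, so `log (Q_S h / P h) ≤ (ω h - μ h S) + E_{h′∼P} (μ h′ S - ω h′)`. The
claim follows since the positive part is monotone and subadditive.
-/

section Tilting

variable {α : Type*} [MeasurableSpace α] {ν : Measure α} {f g : α → ℝ}

theorem integral_le_log_integral_exp [IsProbabilityMeasure ν] (hf : Integrable f ν)
    (hexp : Integrable (fun x => Real.exp (f x)) ν) :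
    ∫ x, f x ∂ν ≤ Real.log (∫ x, Real.exp (f x) ∂ν) := by
  rw [Real.le_log_iff_exp_le (integral_exp_pos hexp)]
  exact convexOn_exp.map_integral_le Real.continuous_exp.continuousOn isClosed_univ
    (ae_of_all _ fun _ => Set.mem_univ _) hf hexp

theorem integrable_exp_sub_tilted_iff (hf : Integrable (fun x => Real.exp (f x)) ν) :
    Integrable (fun x => Real.exp (g x - f x)) (ν.tilted f) ↔
      Integrable (fun x => Real.exp (g x)) ν := by
  simp only [integrable_tilted_iff hf, smul_eq_mul, ← Real.exp_add, add_sub_cancel]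

theorem integral_exp_sub_tilted (ν : Measure α) (f g : α → ℝ) :
    ∫ x, Real.exp (g x - f x) ∂ν.tilted f =
      (∫ x, Real.exp (g x) ∂ν) / ∫ x, Real.exp (f x) ∂ν := by
  simp only [integral_exp_tilted, Pi.add_apply, add_sub_cancel]

/-- The Gibbs–Bogoliubov inequality. -/
theorem log_div_le_integral_sub_tilted [NeZero ν]
    (hf : Integrable (fun x => Real.exp (f x)) ν) (hg : Integrable (fun x => Real.exp (g x)) ν)
    (hfg : Integrable (fun x => f x - g x) (ν.tilted f)) :
    Real.log ((∫ x, Real.exp (f x) ∂ν) / ∫ x, Real.exp (g x) ∂ν) ≤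
      ∫ x, (f x - g x) ∂ν.tilted f := by
  have := isProbabilityMeasure_tilted hf
  have hgf : Integrable (fun x => g x - f x) (ν.tilted f) := by
    simpa only [Pi.neg_def, neg_sub] using hfg.neg
  have jensen : ∫ x, (g x - f x) ∂ν.tilted f ≤
      Real.log ((∫ x, Real.exp (g x) ∂ν) / ∫ x, Real.exp (f x) ∂ν) := by
    rw [← integral_exp_sub_tilted]
    exact integral_le_log_integral_exp hgf ((integrable_exp_sub_tilted_iff hf).2 hg)
  rw [← inv_div, Real.log_inv, neg_le, ← integral_neg]
  simpa only [neg_sub] using jensen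

theorem log_exp_div_div_exp_div (a b : ℝ) {p q : ℝ} (hp : p ≠ 0) (hq : q ≠ 0) :
    Real.log ((Real.exp a / p) / (Real.exp b / q)) = a - b + Real.log (q / p) := by
  rw [div_div_div_comm, ← Real.exp_sub, div_eq_mul_inv, inv_div,
    Real.log_mul (Real.exp_ne_zero _) (div_ne_zero hq hp), Real.log_exp]

theorem log_tilted_density_ratio_le [NeZero ν]
    (hf : Integrable (fun x => Real.exp (f x)) ν) (hg : Integrable (fun x => Real.exp (g x)) ν)
    (hfg : Integrable (fun x => f x - g x) (ν.tilted f)) (x : α) :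
    Real.log ((Real.exp (g x) / ∫ y, Real.exp (g y) ∂ν) /
        (Real.exp (f x) / ∫ y, Real.exp (f y) ∂ν)) ≤
      g x - f x + ∫ y, (f y - g y) ∂ν.tilted f := by
  rw [log_exp_div_div_exp_div _ _ (integral_exp_pos hg).ne' (integral_exp_pos hf).ne']
  gcongr
  exact log_div_le_integral_sub_tilted hf hg hfg

end Tilting

theorem gibbs_log_ratio_pointwise_bound_general
    {H : Type*} [MeasurableSpace H] {lam : Measure H} [NeZero lam] {u w : H → ℝ}
    (hu : Integrable (fun g => Real.exp (-(u g))) lam)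
    (hw : Integrable (fun g => Real.exp (-(w g))) lam)
    (huw : Integrable (fun g => u g - w g) (lam.tilted fun g => -(w g))) (h : H) :
    max (Real.log
        ((Real.exp (-(u h)) / ∫ g, Real.exp (-(u g)) ∂lam) /
          (Real.exp (-(w h)) / ∫ g, Real.exp (-(w g)) ∂lam))) 0 ≤
      max (w h - u h) 0 + max (∫ g, (u g - w g) ∂lam.tilted fun g => -(w g)) 0 := by
  have log_ratio_le :
      Real.log ((Real.exp (-(u h)) / ∫ g, Real.exp (-(u g)) ∂lam) /
          (Real.exp (-(w h)) / ∫ g, Real.exp (-(w g)) ∂lam)) ≤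
        w h - u h + ∫ g, (u g - w g) ∂lam.tilted fun g => -(w g) := by
    simpa only [neg_sub_neg] using
      log_tilted_density_ratio_le hw hu (by simpa only [neg_sub_neg] using huw) h
  calc
    _ ≤ max (w h - u h + ∫ g, (u g - w g) ∂lam.tilted fun g => -(w g)) (0 + 0) :=
      max_le_max log_ratio_le (add_zero 0).ge
    _ ≤ _ := max_add_add_le_max_add_max

/-- **Pointwise bound on the disintegrated KL between two Gibbs densities.**
With `Q_S` having density `e^{−μ(h,S)}/Z_S` and the prior `P` having density
`e^{−ω(h)}/Z_ω` w.r.t. `lam`, for every sample `S` and hypothesis `h`,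
`ln₊(Q_S(h)/P(h)) ≤ [ω(h) − μ(h,S)]₊ + [E_{h′∼P}(μ(h′,S) − ω(h′))]₊`,
provided `μ(·,S) − ω` is `P`-integrable. -/
theorem gibbs_log_ratio_pointwise_bound
    {Z H : Type*} [MeasurableSpace Z] [MeasurableSpace H]
    (m : ℕ) (hm : 0 < m)
    (lam : Measure H) [SigmaFinite lam]
    (μ : H → (Fin m → Z) → ℝ) (hμ : Measurable (Function.uncurry μ))
    (hμint : ∀ S : Fin m → Z, Integrable (fun g => Real.exp (-(μ g S))) lam)
    (hZpos : ∀ S : Fin m → Z, 0 < ∫ g, Real.exp (-(μ g S)) ∂lam)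
    (ω : H → ℝ) (hω : Measurable ω)
    (hωint : Integrable (fun g => Real.exp (-(ω g))) lam)
    (hωpos : 0 < ∫ g, Real.exp (-(ω g)) ∂lam)
    (Pm : Measure H)
    (hPm : Pm = lam.withDensity fun h =>
      ENNReal.ofReal (Real.exp (-(ω h)) / ∫ g, Real.exp (-(ω g)) ∂lam))
    (S : Fin m → Z) (h : H)
    (hint : Integrable (fun h' => μ h' S - ω h') Pm) :
    max (Real.log
        ((Real.exp (-(μ h S)) / ∫ g, Real.exp (-(μ g S)) ∂lam) /
          (Real.exp (-(ω h)) / ∫ g, Real.exp (-(ω g)) ∂lam))) 0 ≤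
      max (ω h - μ h S) 0 + max (∫ h', (μ h' S - ω h') ∂Pm) 0 := by
  have : NeZero lam := ⟨by rintro rfl; simp at hωpos⟩
  subst hPm
  exact gibbs_log_ratio_pointwise_bound_general (hμint S) hωint hint h
end

section
/- Disintegrated bound with an ε-differentially private prior mechanism: Let S ↦ P_S be an ε-differentially private randomized mechanism on H. For any probability measure D on Z, any measurable φ : H × Z^m → ℝ, any posterior Markov kernel S ↦ Q_S with strictly positive densities, and any δ ∈ (0,1], with probability at least 1−δ over S′ ∼ D^m, S ∼ D^m, and h ∼ Q_S (these independent in the stated product/kernel sense) one has φ(h,S) ≤ ln(Q_S(h)/P_S(h)) + m·ε + ln[(1/δ)·E_{V∼D^m} E_{g∼P_{S′}} e^{φ(g,V)}]. -/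
open MeasureTheory ProbabilityTheory

/-!
Applying privacy to one coordinate at a time gives `P_S ≤ e^{mε} P_{S'}` as measures, for all
samples `S` and `S'`. Hence, for a fixed `S'`, the prior `P_{S'}` dominates every `P_S` up to the
factor `e^{mε}` without depending on `S`. On the bad event the density of `Q_S` is at most
`e^{φ(h,S)} / (e^{mε} t)` times that of `P_S`, where `t = E_V E_{g ∼ P_{S'}} e^{φ(g,V)} / δ`.
Integrating this over `S` as in Markov's inequality bounds the probability of the bad event by `δ`,
for each `S'` separately.

The densities, and hence the bad event, need not be measurable: integrals of densities are lower
integrals, and the Markov step is carried out on the measurable subsets of the bad event.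
-/

open scoped ENNReal

section Densities

variable {α β : Type*} [MeasurableSpace α] [MeasurableSpace β] {μ : Measure α}

lemma lintegral_ne_zero_of_forall_ne_zero [NeZero μ] {f : α → ℝ≥0∞} (hf : Measurable f)
    (hf0 : ∀ x, f x ≠ 0) : ∫⁻ x, f x ∂μ ≠ 0 := by
  rw [ne_eq, lintegral_eq_zero_iff hf]
  intro hzero
  obtain ⟨x, hx⟩ := hzero.exists
  exact hf0 x hx

-- For non-measurable `f`: a measurable minorant `k` of `f * g` gives the minorant `k / g` of `f`.
lemma lintegral_mul_le_lintegral_withDensity (f : α → ℝ≥0∞) {g : α → ℝ≥0∞} (hg : Measurable g)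
    (hg_top : ∀ x, g x ≠ ∞) : ∫⁻ x, f x * g x ∂μ ≤ ∫⁻ x, g x ∂(μ.withDensity f) := by
  obtain ⟨k, hk, hk_le, hk_eq⟩ := exists_measurable_le_lintegral_eq μ fun x => f x * g x
  have div_mul_cancel (x : α) : k x / g x * g x = k x :=
    ENNReal.div_mul_cancel' (fun h0 => by simpa [h0] using hk_le x) fun h => absurd h (hg_top x)
  calc ∫⁻ x, f x * g x ∂μ
      = ∫⁻ x, k x / g x * g x ∂μ := by simp only [hk_eq, div_mul_cancel]
    _ = ∫⁻ x, g x ∂(μ.withDensity fun x => k x / g x) :=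
        (lintegral_withDensity_eq_lintegral_mul μ (hk.div hg) hg).symm
    _ ≤ ∫⁻ x, g x ∂(μ.withDensity f) :=
        lintegral_mono' (withDensity_mono <| .of_forall fun x =>
          ENNReal.div_le_of_le_mul (hk_le x)) le_rfl

lemma withDensity_apply_le_lintegral_withDensity {f p w : α → ℝ≥0∞} {s : Set α}
    (hs : MeasurableSet s) (hw : Measurable w) (hw_top : ∀ x, w x ≠ ∞)
    (hle : ∀ x ∈ s, f x ≤ p x * w x) :
    μ.withDensity f s ≤ ∫⁻ x, w x ∂(μ.withDensity p) :=
  calc μ.withDensity f s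
      = ∫⁻ x in s, f x ∂μ := withDensity_apply f hs
    _ ≤ ∫⁻ x in s, p x * w x ∂μ := setLIntegral_mono' hs hle
    _ ≤ ∫⁻ x in s, w x ∂(μ.withDensity p) := by
        rw [restrict_withDensity hs]
        exact lintegral_mul_le_lintegral_withDensity p hw hw_top
    _ ≤ ∫⁻ x, w x ∂(μ.withDensity p) := setLIntegral_le_lintegral _ _

lemma withDensity_le_withDensity_of_ae_withDensity_le {f g : α → ℝ≥0∞}
    (hfg : ∀ᵐ x ∂(μ.withDensity f), f x ≤ g x) : μ.withDensity f ≤ μ.withDensity g := by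
  obtain ⟨N, hN_sub, hN, hN_zero⟩ := exists_measurable_superset_of_null hfg
  refine Measure.le_iff.2 fun s hs => ?_
  calc μ.withDensity f s
      = μ.withDensity f (s \ N) := (measure_sdiff_null hN_zero).symm
    _ = ∫⁻ x in s \ N, f x ∂μ := withDensity_apply f (hs.diff hN)
    _ ≤ ∫⁻ x in s \ N, g x ∂μ :=
        setLIntegral_mono' (hs.diff hN) fun x hx => not_not.1 fun h => hx.2 (hN_sub h)
    _ = μ.withDensity g (s \ N) := (withDensity_apply g (hs.diff hN)).symm
    _ ≤ μ.withDensity g s := measure_mono Set.sdiff_subset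

lemma withDensity_le_smul_withDensity_of_essSup_div_le {f g : α → ℝ≥0∞} {c : ℝ≥0∞}
    (hg_top : ∀ x, g x ≠ ∞) (hc : c ≠ ∞)
    (h : essSup (fun x => f x / g x) (μ.withDensity f) ≤ c) :
    μ.withDensity f ≤ c • μ.withDensity g := by
  rw [← withDensity_smul' _ _ hc]
  refine withDensity_le_withDensity_of_ae_withDensity_le ?_
  filter_upwards [ENNReal.ae_le_essSup fun x => f x / g x] with x hx
  exact (ENNReal.div_le_iff_le_mul (.inr hc) (.inl (hg_top x))).1 (hx.trans h)

lemma one_sub_le_measure_of_forall_subset_compl_s13 [IsProbabilityMeasure μ] {s : Set α} {c : ℝ≥0∞}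
    (h : ∀ t, MeasurableSet t → t ⊆ sᶜ → μ t ≤ c) : 1 - c ≤ μ s := by
  have hmeas : MeasurableSet (toMeasurable μ s) := measurableSet_toMeasurable μ s
  have hcompl : μ (toMeasurable μ s)ᶜ ≤ c :=
    h _ hmeas.compl (Set.compl_subset_compl.2 (subset_toMeasurable μ s))
  rw [tsub_le_iff_right, ← prob_add_prob_compl (μ := μ) hmeas, measure_toMeasurable]
  gcongr

lemma le_prod_apply_of_forall_le [IsProbabilityMeasure μ] {ν : Measure β} [SFinite ν]
    {s : Set (α × β)} {c : ℝ≥0∞} (h : ∀ x, c ≤ ν (Prod.mk x ⁻¹' s)) : c ≤ μ.prod ν s :=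
  calc c = ∫⁻ _, c ∂μ := by simp
    _ ≤ ∫⁻ x, ν (Prod.mk x ⁻¹' toMeasurable (μ.prod ν) s) ∂μ :=
        lintegral_mono fun x => (h x).trans <|
          measure_mono (Set.preimage_mono (subset_toMeasurable _ _))
    _ = μ.prod ν s := by
        rw [← Measure.prod_apply (measurableSet_toMeasurable _ _), measure_toMeasurable]

end Densities

section DifferentialPrivacy

variable {ι Z H : Type*} [MeasurableSpace H]

/-- `ε`-differential privacy of a randomized mechanism `P` on samples indexed by `ι`: changing one
coordinate of the sample changes the probability of every event by a factor of at most `e^ε`. For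
mechanisms with densities this is the bound `D_∞(P_{T'} ‖ P_T) ≤ ε` on the max-divergence. -/
def IsDifferentiallyPrivate (P : (ι → Z) → Measure H) (ε : ℝ) : Prop :=
  ∀ T T' : ι → Z, (∃ j, ∀ i, i ≠ j → T i = T' i) → P T' ≤ ENNReal.ofReal (Real.exp ε) • P T

lemma isDifferentiallyPrivate_of_essSup_div_le {P : (ι → Z) → Measure H} {ε : ℝ} {lam : Measure H}
    {p : (ι → Z) → H → ℝ} (hp : ∀ S h, 0 < p S h)
    (hP : ∀ S, P S = lam.withDensity fun h => ENNReal.ofReal (p S h))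
    (hess : ∀ T T' : ι → Z, (∃ j, ∀ i, i ≠ j → T i = T' i) →
      essSup (fun h => ENNReal.ofReal (p T' h / p T h)) (P T') ≤ ENNReal.ofReal (Real.exp ε)) :
    IsDifferentiallyPrivate P ε := by
  intro T T' hT
  have hratio := hess T T' hT
  simp only [ENNReal.ofReal_div_of_pos (hp T _), hP] at hratio ⊢
  exact withDensity_le_smul_withDensity_of_essSup_div_le (fun _ => ENNReal.ofReal_ne_top)
    ENNReal.ofReal_ne_top hratio

namespace IsDifferentiallyPrivate

variable {P : (ι → Z) → Measure H} {ε : ℝ}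

lemma le_smul_of_eqOn_compl (hP : IsDifferentiallyPrivate P ε) (s : Finset ι) {S S' : ι → Z}
    (hS : ∀ i ∉ s, S i = S' i) : P S ≤ ENNReal.ofReal (Real.exp (s.card * ε)) • P S' := by
  classical
  induction s using Finset.induction_on generalizing S with
  | empty => simp [funext fun i => hS i (Finset.notMem_empty i)]
  | insert a s ha ih =>
    let T := Function.update S a (S' a)
    have hT : ∀ i ∉ s, T i = S' i := by grind
    have hST : ∃ j, ∀ i, i ≠ j → T i = S i := ⟨a, fun i hi => Function.update_of_ne hi _ _⟩
    calc P S ≤ ENNReal.ofReal (Real.exp ε) • P T := hP T S hST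
      _ ≤ ENNReal.ofReal (Real.exp ε) • ENNReal.ofReal (Real.exp (s.card * ε)) • P S' := by
          gcongr
          exact ih hT
      _ = ENNReal.ofReal (Real.exp ((insert a s).card * ε)) • P S' := by
          rw [smul_smul, ← ENNReal.ofReal_mul (Real.exp_nonneg _), ← Real.exp_add,
            Finset.card_insert_of_notMem ha]
          push_cast
          ring_nf

lemma le_smul [Fintype ι] (hP : IsDifferentiallyPrivate P ε) (S S' : ι → Z) :
    P S ≤ ENNReal.ofReal (Real.exp (Fintype.card ι * ε)) • P S' :=
  hP.le_smul_of_eqOn_compl Finset.univ fun i hi => absurd (Finset.mem_univ i) hi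

end IsDifferentiallyPrivate

end DifferentialPrivacy

section DisintegratedBound

variable {Ω H : Type*} [MeasurableSpace Ω] [MeasurableSpace H]

lemma coe_le_log_div_add_add_log_iff {f a p q : ℝ} (hp : 0 < p) (hq : 0 < q) (t : ℝ≥0∞) :
    (f : EReal) ≤ (Real.log (q / p) : EReal) + (a : EReal) + ENNReal.log t ↔
      ENNReal.ofReal (Real.exp f) ≤
        ENNReal.ofReal q / ENNReal.ofReal p * (ENNReal.ofReal (Real.exp a) * t) := by
  have log_ofReal_exp (x : ℝ) : ENNReal.log (ENNReal.ofReal (Real.exp x)) = x := by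
    rw [ENNReal.log_ofReal_of_pos (Real.exp_pos x), Real.log_exp]
  rw [← ENNReal.log_le_log_iff, ENNReal.log_mul_add, ENNReal.log_mul_add,
    ← ENNReal.ofReal_div_of_pos hp, ENNReal.log_ofReal_of_pos (div_pos hq hp), log_ofReal_exp,
    log_ofReal_exp, add_assoc]

lemma ofReal_le_mul_div_of_not_le_log {f a p q : ℝ} (hp : 0 < p) (hq : 0 < q) {t : ℝ≥0∞}
    (h : ¬(f : EReal) ≤ (Real.log (q / p) : EReal) + (a : EReal) + ENNReal.log t) :
    ENNReal.ofReal q ≤ ENNReal.ofReal p *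
      (ENNReal.ofReal (Real.exp f) / (ENNReal.ofReal (Real.exp a) * t)) := by
  rw [coe_le_log_div_add_add_log_iff hp hq, not_le] at h
  have hexp : ENNReal.ofReal (Real.exp f) ≠ 0 := (ENNReal.ofReal_pos.2 (Real.exp_pos f)).ne'
  have hp0 : ENNReal.ofReal p ≠ 0 := (ENNReal.ofReal_pos.2 hp).ne'
  have hratio : ENNReal.ofReal q / ENNReal.ofReal p ≤
      ENNReal.ofReal (Real.exp f) / (ENNReal.ofReal (Real.exp a) * t) :=
    (ENNReal.le_div_iff_mul_le (.inr hexp) (.inr ENNReal.ofReal_ne_top)).2 h.le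
  rwa [ENNReal.div_le_iff_le_mul (.inl hp0) (.inl ENNReal.ofReal_ne_top), mul_comm] at hratio

lemma compProd_apply_le_mul_lintegral_lintegral {μ : Measure Ω} [SFinite μ] {lam ρ : Measure H}
    {κ : Kernel Ω H} [IsSFiniteKernel κ] {p q w : Ω → H → ℝ≥0∞} {c : ℝ≥0∞} (hc : c ≠ ∞)
    (hκ : ∀ S, κ S = lam.withDensity (q S)) (hρ : ∀ S, lam.withDensity (p S) ≤ c • ρ)
    (hw : ∀ S, Measurable (w S)) (hw_top : ∀ S h, w S h ≠ ∞)
    {B : Set (Ω × H)} (hB : MeasurableSet B)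
    (hle : ∀ x ∈ B, q x.1 x.2 ≤ p x.1 x.2 * w x.1 x.2) :
    (μ ⊗ₘ κ) B ≤ c * ∫⁻ S, ∫⁻ h, w S h ∂ρ ∂μ := by
  rw [Measure.compProd_apply hB, ← lintegral_const_mul' _ _ hc]
  refine lintegral_mono fun S => ?_
  calc κ S (Prod.mk S ⁻¹' B)
      ≤ ∫⁻ h, w S h ∂(lam.withDensity (p S)) := by
        rw [hκ S]
        exact withDensity_apply_le_lintegral_withDensity (measurable_prodMk_left hB) (hw S)
          (hw_top S) fun h hh => hle (S, h) hh
    _ ≤ ∫⁻ h, w S h ∂(c • ρ) := lintegral_mono' (hρ S) le_rfl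
    _ = c * ∫⁻ h, w S h ∂ρ := lintegral_smul_measure _ _

lemma lintegral_lintegral_ofReal_exp_ne_zero {μ : Measure Ω} [NeZero μ] {ρ : Measure H} [SFinite ρ]
    [NeZero ρ] {φ : H → Ω → ℝ} (hφ : Measurable (Function.uncurry φ)) :
    ∫⁻ V, ∫⁻ g, ENNReal.ofReal (Real.exp (φ g V)) ∂ρ ∂μ ≠ 0 := by
  have hmeas : Measurable fun x : Ω × H => ENNReal.ofReal (Real.exp (φ x.2 x.1)) :=
    (hφ.comp measurable_swap).exp.ennreal_ofReal
  refine lintegral_ne_zero_of_forall_ne_zero hmeas.lintegral_prod_right' fun V => ?_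
  exact lintegral_ne_zero_of_forall_ne_zero (hmeas.comp measurable_prodMk_left) fun g =>
    (ENNReal.ofReal_pos.2 (Real.exp_pos _)).ne'

theorem disintegrated_bound_of_le_smul_prior {μ : Measure Ω} [IsProbabilityMeasure μ]
    {lam ρ : Measure H} [SFinite ρ] [NeZero ρ] {p q : Ω → H → ℝ} (hp : ∀ S h, 0 < p S h)
    (hq : ∀ S h, 0 < q S h) {κ : Kernel Ω H} [IsMarkovKernel κ]
    (hκ : ∀ S, κ S = lam.withDensity fun h => ENNReal.ofReal (q S h)) {a : ℝ}
    (hρ : ∀ S, lam.withDensity (fun h => ENNReal.ofReal (p S h)) ≤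
      ENNReal.ofReal (Real.exp a) • ρ)
    {φ : H → Ω → ℝ} (hφ : Measurable (Function.uncurry φ)) {δ : ℝ} (hδ : 0 < δ) :
    1 - ENNReal.ofReal δ ≤ (μ ⊗ₘ κ) {x | (φ x.2 x.1 : EReal) ≤
      (Real.log (q x.1 x.2 / p x.1 x.2) : EReal) + (a : EReal) +
        ENNReal.log (ENNReal.ofReal (1 / δ) *
          ∫⁻ V, ∫⁻ g, ENNReal.ofReal (Real.exp (φ g V)) ∂ρ ∂μ)} := by
  refine one_sub_le_measure_of_forall_subset_compl_s13 fun B hB hB_bad => ?_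
  set C := ∫⁻ V, ∫⁻ g, ENNReal.ofReal (Real.exp (φ g V)) ∂ρ ∂μ with hC
  set c := ENNReal.ofReal (Real.exp a)
  set t := ENNReal.ofReal (1 / δ) * C
  have hc : c ≠ 0 := (ENNReal.ofReal_pos.2 (Real.exp_pos a)).ne'
  have hc_top : c ≠ ∞ := ENNReal.ofReal_ne_top
  have ht : t ≠ 0 := mul_ne_zero (ENNReal.ofReal_pos.2 (one_div_pos.2 hδ)).ne'
    (lintegral_lintegral_ofReal_exp_ne_zero hφ)
  have hct : (c * t)⁻¹ ≠ ∞ := ENNReal.inv_ne_top.2 (mul_ne_zero hc ht)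
  calc (μ ⊗ₘ κ) B
      ≤ c * ∫⁻ S, ∫⁻ h, ENNReal.ofReal (Real.exp (φ h S)) / (c * t) ∂ρ ∂μ :=
        compProd_apply_le_mul_lintegral_lintegral hc_top hκ hρ
          (fun S => ((hφ.comp measurable_prodMk_right).exp.ennreal_ofReal).div_const _)
          (fun _ _ => ENNReal.mul_ne_top ENNReal.ofReal_ne_top hct) hB
          fun x hx => ofReal_le_mul_div_of_not_le_log (hp _ _) (hq _ _) (hB_bad hx)
    _ = c * C / (c * t) := by
        simp only [div_eq_mul_inv, lintegral_mul_const' _ _ hct, ← hC, mul_assoc]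
    _ = C / t := ENNReal.mul_div_mul_left _ _ hc hc_top
    _ ≤ ENNReal.ofReal δ := by
        refine ENNReal.div_le_of_le_mul (le_of_eq ?_)
        rw [← mul_assoc, ← ENNReal.ofReal_mul hδ.le, mul_one_div_cancel hδ.ne',
          ENNReal.ofReal_one, one_mul]

end DisintegratedBound

theorem disintegrated_bound_with_dp_prior_general
    {ι Z H : Type*} [Fintype ι] [MeasurableSpace Z] [MeasurableSpace H]
    {μ ν : Measure (ι → Z)} [IsProbabilityMeasure μ] [IsProbabilityMeasure ν] {lam : Measure H}
    {p : (ι → Z) → H → ℝ} (hp : ∀ S h, 0 < p S h)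
    {P : (ι → Z) → Measure H} [∀ S, IsProbabilityMeasure (P S)]
    (hP : ∀ S, P S = lam.withDensity fun h => ENNReal.ofReal (p S h))
    {ε : ℝ} (hDP : IsDifferentiallyPrivate P ε)
    {q : (ι → Z) → H → ℝ} (hq : ∀ S h, 0 < q S h)
    {κ : Kernel (ι → Z) H} [IsMarkovKernel κ]
    (hκ : ∀ S, κ S = lam.withDensity fun h => ENNReal.ofReal (q S h))
    {φ : H → (ι → Z) → ℝ} (hφ : Measurable (Function.uncurry φ)) {δ : ℝ} (hδ : 0 < δ) :
    1 - ENNReal.ofReal δ ≤ (ν.prod (μ ⊗ₘ κ)) {x | (φ x.2.2 x.2.1 : EReal) ≤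
      (Real.log (q x.2.1 x.2.2 / p x.2.1 x.2.2) : EReal) + ((Fintype.card ι * ε : ℝ) : EReal) +
        ENNReal.log (ENNReal.ofReal (1 / δ) *
          ∫⁻ V, ∫⁻ g, ENNReal.ofReal (Real.exp (φ g V)) ∂(P x.1) ∂μ)} :=
  le_prod_apply_of_forall_le fun S' =>
    disintegrated_bound_of_le_smul_prior hp hq hκ (fun S => hP S ▸ hDP.le_smul S S') hφ hδ

/-- **Disintegrated bound with an ε-differentially private prior mechanism.**
`S ↦ P_S` is an ε-differentially private randomized mechanism on `H` (for any
two samples differing in exactly one coordinate, the essential supremum of the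
density ratio is at most `e^ε`).  With probability at least `1−δ` over
`S′ ∼ D^m`, `S ∼ D^m` and `h ∼ Q_S`,
`φ(h,S) ≤ ln(Q_S(h)/P_S(h)) + m·ε
  + ln[(1/δ)·E_{V∼D^m} E_{g∼P_{S′}} e^{φ(g,V)}]`
(stated in `EReal` so that it is trivially true when the expectation is
infinite). -/
theorem disintegrated_bound_with_dp_prior
    {Z H : Type*} [MeasurableSpace Z] [MeasurableSpace H]
    (m : ℕ) (hm : 0 < m)
    (D : Measure Z) [IsProbabilityMeasure D]
    (lam : Measure H) [SigmaFinite lam]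
    -- the randomized prior mechanism, with strictly positive densities
    (Pd : (Fin m → Z) → H → ℝ) (hPdpos : ∀ S h, 0 < Pd S h)
    (κP : Kernel (Fin m → Z) H) [IsMarkovKernel κP]
    (hκP : ∀ S, κP S = lam.withDensity fun h => ENNReal.ofReal (Pd S h))
    (ε : ℝ) (hε : 0 ≤ ε)
    -- ε-differential privacy of the mechanism
    (hDP : ∀ T T' : Fin m → Z, (∃ j : Fin m, ∀ i, i ≠ j → T i = T' i) →
      essSup (fun h => ENNReal.ofReal (Pd T' h / Pd T h)) (κP T') ≤
        ENNReal.ofReal (Real.exp ε))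
    -- the posterior Markov kernel with strictly positive densities
    (Q : (Fin m → Z) → H → ℝ) (hQpos : ∀ S h, 0 < Q S h)
    (κQ : Kernel (Fin m → Z) H) [IsMarkovKernel κQ]
    (hκQ : ∀ S, κQ S = lam.withDensity fun h => ENNReal.ofReal (Q S h))
    (φ : H → (Fin m → Z) → ℝ) (hφ : Measurable (Function.uncurry φ))
    (δ : ℝ) (hδ : δ ∈ Set.Ioc (0:ℝ) 1) :
    1 - ENNReal.ofReal δ ≤
      ((Measure.pi (fun _ : Fin m => D)).prod
          (Measure.pi (fun _ : Fin m => D) ⊗ₘ κQ))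
        {p : (Fin m → Z) × ((Fin m → Z) × H) |
          (φ p.2.2 p.2.1 : EReal) ≤
            (Real.log (Q p.2.1 p.2.2 / Pd p.2.1 p.2.2) : EReal)
            + ((m * ε : ℝ) : EReal)
            + ENNReal.log (ENNReal.ofReal (1/δ) *
                ∫⁻ V, ∫⁻ g, ENNReal.ofReal (Real.exp (φ g V)) ∂(κP p.1)
                  ∂(Measure.pi (fun _ : Fin m => D))) } := by
  simpa only [Fintype.card_fin] using disintegrated_bound_with_dp_prior_general hPdpos hκP
    (isDifferentiallyPrivate_of_essSup_div_le hPdpos hκP hDP) hQpos hκQ hφ hδ.1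
end
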